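/- Let n ≥ 2 be an integer such that {log₂(3n)} < 1 − {log₂ 3} or {log₂(3n)} ≥ {log₂ 3}. Then D_±(C_3 ⊕ C_{3n}) = ⌊log₂(9n)⌋ + 1. -/

import Mathlib

open Finset

/-- A sequence `g` over `G` has an `A`-weighted zero-subsum: there is a nonempty
index set `I` and weights `a i ∈ A` for `i ∈ I` with `∑ i ∈ I, a i • g i = 0`. -/
def HasWZS (A : Set ℤ) {G : Type*} [AddCommGroup G] {ℓ : ℕ} (g : Fin ℓ → G) : Prop :=
  ∃ (I : Finset (Fin ℓ)) (a : Fin ℓ → ℤ), I.Nonempty ∧ (∀ i ∈ I, a i ∈ A) ∧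
    ∑ i ∈ I, a i • g i = 0

/-- The `A`-weighted Davenport constant of `G`: the smallest `ℓ` such that every
sequence of length `ℓ` over `G` has an `A`-weighted zero-subsum. -/
noncomputable def DavW (A : Set ℤ) (G : Type*) [AddCommGroup G] : ℕ :=
  sInf {ℓ : ℕ | ∀ g : Fin ℓ → G, HasWZS A g}

/-- The plus-minus weighted Davenport constant. -/
noncomputable def Davpm (G : Type*) [AddCommGroup G] : ℕ :=
  DavW ({1, -1} : Set ℤ) G

/-!
If `|G| < 2 ^ ℓ`, two of the `2 ^ ℓ` subsums of a sequence of length `ℓ` over `G` agree, and their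
difference is a plus-minus weighted zero-subsum; hence `D_±(G) ≤ ⌊log₂ |G|⌋ + 1`.

Conversely, `x, 2x, 4x, …, 2 ^ (m - 1) x` has no such subsum as long as `2 ^ m` is at most the order
of `x`, since signed binary sums of length `m` are smaller than `2 ^ m` in absolute value. Taking
powers of two in both summands of `C₃ ⊕ C₃ₙ` yields `D_± > ⌊log₂ 3⌋ + ⌊log₂ 3n⌋`, which matches the
upper bound when the fractional parts of `log₂ 3` and `log₂ 3n` sum to less than `1`. When the
fractional part of `log₂ 3n` is at least that of `log₂ 3`, the bound is attained by the
`⌊log₂ n⌋` powers of two in `0 ⊕ C₃ₙ` together with the three elements `(1, ⌊n/2⌋ + i n)`: a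
nontrivial signed sum of these three that vanishes in `C₃` is congruent to `±n`, `±2n` or `±3⌊n/2⌋`
modulo `3n`, at distance at least `n` from every multiple of `3n`, hence is not a signed binary sum.
-/

variable {G H : Type*} [AddCommGroup G] [AddCommGroup H] {A : Set ℤ} {k m ℓ : ℕ}

theorem HasWZS.of_comp {g : Fin ℓ → G} (f : Fin k ↪ Fin ℓ) (h : HasWZS A (g ∘ f)) :
    HasWZS A g := by
  obtain ⟨I, a, hI, ha, hsum⟩ := h
  refine ⟨I.map f, Function.extend f a 0, hI.map, ?_, ?_⟩
  · simpa only [forall_mem_map, f.injective.extend_apply] using ha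
  · simpa only [sum_map, f.injective.extend_apply, Function.comp_apply] using hsum

theorem lt_davW_of_not_hasWZS (hfin : ∃ k, ∀ g : Fin k → G, HasWZS A g) {g : Fin ℓ → G}
    (hg : ¬ HasWZS A g) : ℓ < DavW A G := by
  by_contra! hle
  exact hg ((Nat.sInf_mem hfin _).of_comp (Fin.castLEEmb hle))

theorem hasWZS_pm_iff {g : Fin ℓ → G} :
    HasWZS {1, -1} g ↔ ∃ e : Fin ℓ → ℤ, (∀ i, |e i| ≤ 1) ∧ ∑ i, e i • g i = 0 ∧ e ≠ 0 := by
  constructor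
  · rintro ⟨I, a, ⟨j, hj⟩, ha, hsum⟩
    have abs_weight : ∀ i ∈ I, |a i| = 1 := fun i hi ↦ (abs_eq zero_le_one).2 (ha i hi)
    refine ⟨fun i ↦ if i ∈ I then a i else 0, fun i ↦ ?_, ?_, fun h ↦ ?_⟩
    · dsimp only
      split_ifs with hi
      · exact (abs_weight i hi).le
      · simp
    · simpa [ite_smul] using hsum
    · have hj0 : a j = 0 := by simpa [hj] using congrFun h j
      simpa [hj0] using abs_weight j hj
  · rintro ⟨e, he, hsum, hne⟩
    refine ⟨univ.filter (e · ≠ 0), e, ?_, fun i hi ↦ ?_, ?_⟩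
    · simpa [Finset.Nonempty] using Function.ne_iff.1 hne
    · have hi0 : e i ≠ 0 := (mem_filter.1 hi).2
      exact (abs_eq zero_le_one).1 (le_antisymm (he i) (Int.one_le_abs hi0))
    · rw [← hsum]
      exact sum_filter_of_ne fun i _ h h0 ↦ h (by rw [h0, zero_smul])

theorem not_hasWZS_pm_iff {g : Fin ℓ → G} :
    ¬ HasWZS {1, -1} g ↔ ∀ e : Fin ℓ → ℤ, (∀ i, |e i| ≤ 1) → ∑ i, e i • g i = 0 → e = 0 := by
  rw [hasWZS_pm_iff]
  push Not
  rfl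

theorem hasWZS_pm_of_card_lt_two_pow [Finite G] (h : Nat.card G < 2 ^ ℓ) (g : Fin ℓ → G) :
    HasWZS {1, -1} g := by
  have := Fintype.ofFinite G
  obtain ⟨c, d, hne, hcd⟩ := Fintype.exists_ne_map_eq_of_card_lt
    (fun c : Fin ℓ → Fin 2 ↦ ∑ i, ((c i : ℕ) : ℤ) • g i)
    (by simpa [Nat.card_eq_fintype_card] using h)
  refine hasWZS_pm_iff.2 ⟨fun i ↦ (c i : ℕ) - (d i : ℕ), fun i ↦ ?_, ?_, fun h0 ↦ hne ?_⟩
  · have := (c i).isLt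
    have := (d i).isLt
    simp only [abs_le]
    omega
  · simpa only [sub_smul, sum_sub_distrib, sub_eq_zero] using hcd
  · ext i
    exact_mod_cast sub_eq_zero.1 (congrFun h0 i)

theorem davpm_le_log_card_add_one [Finite G] : Davpm G ≤ Nat.log 2 (Nat.card G) + 1 :=
  Nat.sInf_le (hasWZS_pm_of_card_lt_two_pow (Nat.lt_pow_succ_log_self one_lt_two _))

theorem lt_davpm_of_not_hasWZS [Finite G] {g : Fin ℓ → G} (hg : ¬ HasWZS {1, -1} g) :
    ℓ < Davpm G :=
  lt_davW_of_not_hasWZS ⟨_, hasWZS_pm_of_card_lt_two_pow (Nat.lt_two_pow_self (n := Nat.card G))⟩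
    hg

theorem not_hasWZS_pm_append {g : Fin k → G} {h : Fin m → G} (hh : ¬ HasWZS {1, -1} h)
    (hg : ∀ (e : Fin k → ℤ) (f : Fin m → ℤ), (∀ i, |e i| ≤ 1) → (∀ i, |f i| ≤ 1) →
      ∑ i, e i • g i = ∑ i, f i • h i → e = 0) :
    ¬ HasWZS {1, -1} (Fin.append g h) := by
  rw [not_hasWZS_pm_iff] at hh ⊢
  intro e he hsum
  simp only [Fin.sum_univ_add, Fin.append_left, Fin.append_right] at hsum
  have left_zero : (fun i ↦ e (Fin.castAdd m i)) = 0 := by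
    refine hg _ (fun i ↦ -e (Fin.natAdd k i)) (fun _ ↦ he _) (fun _ ↦ ?_) ?_
    · simpa only [abs_neg] using he _
    · simpa only [neg_smul, sum_neg_distrib] using eq_neg_of_add_eq_zero_left hsum
  have right_zero : (fun i ↦ e (Fin.natAdd k i)) = 0 := by
    refine hh _ (fun _ ↦ he _) ?_
    simpa [funext_iff.1 left_zero] using hsum
  funext i
  exact Fin.addCases (congrFun left_zero) (congrFun right_zero) i

theorem not_hasWZS_pm_append_prod {g : Fin k → G} {h : Fin m → H} (hg : ¬ HasWZS {1, -1} g)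
    (hh : ¬ HasWZS {1, -1} h) :
    ¬ HasWZS {1, -1} (Fin.append (fun i ↦ (g i, (0 : H))) (fun i ↦ ((0 : G), h i))) := by
  rw [not_hasWZS_pm_iff] at hg hh
  refine not_hasWZS_pm_append (not_hasWZS_pm_iff.2 fun e he hsum ↦ hh e he ?_)
    fun e f he _ hsum ↦ hg e he ?_
  · simpa [Prod.snd_sum] using congrArg Prod.snd hsum
  · simpa [Prod.fst_sum] using congrArg Prod.fst hsum

theorem abs_sum_mul_two_pow_lt {e : Fin m → ℤ} (he : ∀ i, |e i| ≤ 1) :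
    |∑ i, e i * 2 ^ (i : ℕ)| < 2 ^ m :=
  calc |∑ i, e i * 2 ^ (i : ℕ)| ≤ ∑ i, |e i * 2 ^ (i : ℕ)| := abs_sum_le_sum_abs _ _
    _ ≤ ∑ i : Fin m, 2 ^ (i : ℕ) := sum_le_sum fun i _ ↦ by
      rw [abs_mul, abs_of_pos (by positivity : (0 : ℤ) < 2 ^ (i : ℕ))]
      exact mul_le_of_le_one_left (by positivity) (he i)
    _ < 2 ^ m := by
      rw [Fin.sum_univ_eq_sum_range (fun i ↦ (2 : ℤ) ^ i)]
      exact_mod_cast Nat.geomSum_lt le_rfl fun _ ↦ mem_range.1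

theorem eq_zero_of_sum_mul_two_pow_eq_zero {e : Fin m → ℤ} (he : ∀ i, |e i| ≤ 1)
    (hsum : ∑ i, e i * 2 ^ (i : ℕ) = 0) : e = 0 := by
  induction m with
  | zero => exact Subsingleton.elim _ _
  | succ m ih =>
    have split : e 0 + 2 * ∑ i : Fin m, e i.succ * 2 ^ (i : ℕ) = 0 := by
      rw [← hsum, Fin.sum_univ_succ, mul_sum]
      simp [pow_succ', mul_left_comm]
    have head_zero : e 0 = 0 := by
      have := abs_le.1 (he 0)
      omega
    have tail_zero : (fun i : Fin m ↦ e i.succ) = 0 := ih (fun _ ↦ he _) (by omega)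
    funext i
    exact Fin.cases head_zero (congrFun tail_zero) i

theorem sum_smul_two_pow_smul (e : Fin m → ℤ) (x : G) :
    ∑ i, e i • (2 : ℤ) ^ (i : ℕ) • x = (∑ i, e i * 2 ^ (i : ℕ)) • x := by
  simp only [sum_smul, mul_smul]

theorem not_hasWZS_pm_two_pow_smul {x : G} (hx : 2 ^ m ≤ addOrderOf x) :
    ¬ HasWZS {1, -1} (fun i : Fin m ↦ (2 : ℤ) ^ (i : ℕ) • x) := by
  refine not_hasWZS_pm_iff.2 fun e he hsum ↦ eq_zero_of_sum_mul_two_pow_eq_zero he ?_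
  rw [sum_smul_two_pow_smul, ← addOrderOf_dvd_iff_zsmul_eq_zero] at hsum
  exact Int.eq_zero_of_abs_lt_dvd hsum
    ((abs_sum_mul_two_pow_lt he).trans_le (by exact_mod_cast hx))

theorem log_add_log_lt_davpm_zmod_prod (a b : ℕ) [NeZero a] [NeZero b] :
    Nat.log 2 a + Nat.log 2 b < Davpm (ZMod a × ZMod b) := by
  have not_hasWZS (c : ℕ) [NeZero c] : ¬ HasWZS {1, -1}
      (fun i : Fin (Nat.log 2 c) ↦ (2 : ℤ) ^ (i : ℕ) • (1 : ZMod c)) :=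
    not_hasWZS_pm_two_pow_smul <|
      (Nat.pow_log_le_self 2 (NeZero.ne c)).trans_eq (ZMod.addOrderOf_one c).symm
  exact lt_davpm_of_not_hasWZS (not_hasWZS_pm_append_prod (not_hasWZS a) (not_hasWZS b))

/-- The three elements `(1, ⌊n/2⌋ + i n)`, `i = 0, 1, 2`, of `C₃ ⊕ C₃ₙ`, which extend the powers of
two in `0 ⊕ C₃ₙ` to a longer sequence without plus-minus weighted zero-subsum. -/
def thirdTranslates (n : ℕ) (i : Fin 3) : ZMod 3 × ZMod (3 * n) :=
  (1, ((n / 2 + i * n : ℕ) : ZMod (3 * n)))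

theorem le_abs_of_dvd_sub {M N r s : ℤ} (hdvd : N ∣ r - s) (hr : M ≤ |r|) (hrN : |r| + M ≤ N) :
    M ≤ |s| := by
  by_contra! hs
  have hlt : |r - s| < N := by linarith [abs_sub r s]
  rw [sub_eq_zero.1 (Int.eq_zero_of_abs_lt_dvd hdvd hlt)] at hr
  exact hr.not_gt hs

theorem sum_smul_thirdTranslates_eq_iff {n : ℕ} {e : Fin 3 → ℤ} {s : ℤ} :
    ∑ i, e i • thirdTranslates n i = (0, (s : ZMod (3 * n))) ↔
      3 ∣ e 0 + e 1 + e 2 ∧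
        3 * (n : ℤ) ∣ (e 0 + e 1 + e 2) * (n / 2 : ℕ) + (e 1 + 2 * e 2) * n - s := by
  have fst_eq : (∑ i, e i • thirdTranslates n i).1 = ((e 0 + e 1 + e 2 : ℤ) : ZMod 3) := by
    simp [thirdTranslates, Fin.sum_univ_three]
  have snd_eq : (∑ i, e i • thirdTranslates n i).2 =
      (((e 0 + e 1 + e 2) * (n / 2 : ℕ) + (e 1 + 2 * e 2) * n : ℤ) : ZMod (3 * n)) := by
    simp only [thirdTranslates, Fin.sum_univ_three]
    generalize n / 2 = q
    simp only [Prod.smul_mk, Prod.snd_add, zsmul_eq_mul, Fin.val_zero, Fin.val_one, Fin.val_two]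
    push_cast
    ring
  rw [Prod.ext_iff, fst_eq, snd_eq, ZMod.intCast_zmod_eq_zero_iff_dvd, ← sub_eq_zero,
    ← Int.cast_sub, ZMod.intCast_zmod_eq_zero_iff_dvd]
  push_cast
  rfl

theorem le_abs_of_sum_smul_thirdTranslates_eq {n : ℕ} (hn : 2 ≤ n) {e : Fin 3 → ℤ}
    (he : ∀ i, |e i| ≤ 1) (hne : e ≠ 0) {s : ℤ}
    (hsum : ∑ i, e i • thirdTranslates n i = (0, (s : ZMod (3 * n)))) : (n : ℤ) ≤ |s| := by
  obtain ⟨⟨t, ht⟩, hdvd⟩ := sum_smul_thirdTranslates_eq_iff.1 hsum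
  have h0 := abs_le.1 (he 0)
  have h1 := abs_le.1 (he 1)
  have h2 := abs_le.1 (he 2)
  -- Modulo `3n` the second coordinate is `±n` or `±2n` when `t = 0`, and `±3⌊n/2⌋` when `t = ±1`.
  obtain rfl | ht0 := eq_or_ne t 0
  · have diff_ne : e 2 - e 0 ≠ 0 := by
      intro hdiff
      have all_zero : e 0 = 0 ∧ e 1 = 0 ∧ e 2 = 0 := by omega
      exact hne (funext (Fin.forall_fin_succ.2 ⟨all_zero.1, Fin.forall_fin_two.2 all_zero.2⟩))
    have one_le := Int.one_le_abs diff_ne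
    have le_two : |e 2 - e 0| ≤ 2 := abs_le.2 (by omega)
    refine le_abs_of_dvd_sub (N := 3 * n) (r := (e 2 - e 0) * n) ?_ ?_ ?_
    · convert hdvd using 2
      linear_combination (-(n / 2 : ℕ) - n : ℤ) * ht
    all_goals
      rw [abs_mul, Nat.abs_cast]
      nlinarith
  · have abs_t : |t| = 1 := le_antisymm (abs_le.2 (by omega)) (Int.one_le_abs ht0)
    have abs_shift : |3 * t * (n / 2 : ℕ)| = 3 * (n / 2 : ℕ) := by
      rw [abs_mul, abs_mul, abs_t, Nat.abs_cast]
      norm_num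
    have all_eq : e 1 = t ∧ e 2 = t := by
      rcases (abs_eq zero_le_one).1 abs_t with rfl | rfl <;> omega
    refine le_abs_of_dvd_sub (N := 3 * n) (r := 3 * t * (n / 2 : ℕ)) ?_ ?_ ?_
    · have regroup : 3 * t * (n / 2 : ℕ) + (t + 2 * t) * n - s =
          3 * t * (n / 2 : ℕ) - s + 3 * n * t := by ring
      rwa [ht, all_eq.1, all_eq.2, regroup, dvd_add_left (dvd_mul_right _ _)] at hdvd
    all_goals
      rw [abs_shift]
      omega

theorem log_add_three_lt_davpm {n : ℕ} (hn : 2 ≤ n) :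
    Nat.log 2 n + 3 < Davpm (ZMod 3 × ZMod (3 * n)) := by
  have : NeZero (3 * n) := ⟨by omega⟩
  have two_pow_le : 2 ^ Nat.log 2 n ≤ n := Nat.pow_log_le_self 2 (by omega)
  have addOrderOf_eq : addOrderOf ((0, 1) : ZMod 3 × ZMod (3 * n)) = 3 * n := by
    rw [Prod.addOrderOf_mk, addOrderOf_zero, ZMod.addOrderOf_one, Nat.lcm_one_left]
  have powers_not_hasWZS := not_hasWZS_pm_two_pow_smul (m := Nat.log 2 n)
    (x := ((0, 1) : ZMod 3 × ZMod (3 * n))) (by omega)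
  rw [add_comm]
  refine lt_davpm_of_not_hasWZS (not_hasWZS_pm_append (g := thirdTranslates n) powers_not_hasWZS
    fun e f he hf hsum ↦ ?_)
  by_contra hne
  rw [sum_smul_two_pow_smul, Prod.smul_mk, smul_zero, zsmul_one] at hsum
  have two_pow_lt := (le_abs_of_sum_smul_thirdTranslates_eq hn he hne hsum).trans_lt
    (abs_sum_mul_two_pow_lt hf)
  exact two_pow_lt.not_ge (by exact_mod_cast two_pow_le)

theorem floor_logb_natCast_eq_natLog (b n : ℕ) : ⌊Real.logb b n⌋ = Nat.log b n := by
  rw [Real.floor_logb_natCast n.cast_nonneg, Int.log_natCast]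

section NatLog

variable {a b c : ℕ}

theorem natLog_mul_le_of_fract_add_fract_lt (ha : a ≠ 0) (hc : c ≠ 0)
    (h : Int.fract (Real.logb b a) + Int.fract (Real.logb b c) < 1) :
    Nat.log b (a * c) ≤ Nat.log b a + Nat.log b c := by
  zify
  simp only [← floor_logb_natCast_eq_natLog, Int.floor_le_iff]
  push_cast
  rw [Real.logb_mul (by positivity) (by positivity)]
  simp only [Int.fract] at h
  linarith

theorem natLog_mul_le_of_fract_le_fract (ha : a ≠ 0) (hc : c ≠ 0)
    (h : Int.fract (Real.logb b a) ≤ Int.fract (Real.logb b (a * c : ℕ))) :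
    Nat.log b (a * c) ≤ Nat.log b a + Nat.log b c := by
  zify
  simp only [← floor_logb_natCast_eq_natLog, ← sub_le_iff_le_add', Int.le_floor]
  push_cast at h ⊢
  rw [Real.logb_mul (by positivity) (by positivity)] at h ⊢
  simp only [Int.fract] at h
  linarith

theorem natLog_mul_le_add_one (ha : a ≠ 0) (hc : c ≠ 0) :
    Nat.log b (a * c) ≤ Nat.log b a + Nat.log b c + 1 := by
  have := Int.le_floor_add_floor (Real.logb b a) (Real.logb b c)
  rw [← Real.logb_mul (by positivity) (by positivity), ← Nat.cast_mul] at this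
  simp only [floor_logb_natCast_eq_natLog] at this
  omega

end NatLog

theorem stmt11 (n : ℕ) (hn : 2 ≤ n)
    (h : Int.fract (Real.logb 2 (3 * (n : ℝ))) < 1 - Int.fract (Real.logb 2 3) ∨
         Int.fract (Real.logb 2 3) ≤ Int.fract (Real.logb 2 (3 * (n : ℝ)))) :
    (Davpm (ZMod 3 × ZMod (3 * n)) : ℤ) = ⌊Real.logb 2 (9 * (n : ℝ))⌋ + 1 := by
  have : NeZero (3 * n) := ⟨by omega⟩
  have hn0 : 3 * n ≠ 0 := NeZero.ne _
  have log_three : Nat.log 2 3 = 1 := by norm_num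
  have card_eq : Nat.card (ZMod 3 × ZMod (3 * n)) = 3 * (3 * n) := by simp
  have floor_eq : ⌊Real.logb 2 (9 * (n : ℝ))⌋ = Nat.log 2 (3 * (3 * n)) := by
    rw [← floor_logb_natCast_eq_natLog]
    push_cast
    ring_nf
  have lower : Nat.log 2 (3 * (3 * n)) < Davpm (ZMod 3 × ZMod (3 * n)) := by
    rcases h with h | h
    · refine lt_of_le_of_lt ?_ (log_add_log_lt_davpm_zmod_prod 3 (3 * n))
      exact natLog_mul_le_of_fract_add_fract_lt three_ne_zero hn0 (by push_cast; linarith)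
    · refine lt_of_le_of_lt ?_ (log_add_three_lt_davpm hn)
      have log_nine_mul := natLog_mul_le_add_one (b := 2) three_ne_zero hn0
      have log_three_mul := natLog_mul_le_of_fract_le_fract (b := 2) three_ne_zero
        (right_ne_zero_of_mul hn0) (by exact_mod_cast h)
      omega
  have upper := davpm_le_log_card_add_one (G := ZMod 3 × ZMod (3 * n))
  rw [card_eq] at upper
  rw [floor_eq]
  omega
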